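/- Let Y be a real-valued random variable with E|Y| < ∞ and cumulative distribution function F, let u ∈ (0,1), and suppose there exist θ_u ∈ ℝ, c > 0 and δ > 0 such that F(θ_u) = u, F(s) − u ≥ c·(s − θ_u) for all s ∈ [θ_u, θ_u + δ], and u − F(s) ≥ c·(θ_u − s) for all s ∈ [θ_u − δ, θ_u]. Then for every θ with |θ − θ_u| ≤ δ, E[ρ_u(Y − θ)] − E[ρ_u(Y − θ_u)] ≥ (c/2)·(θ − θ_u)². -/

import Mathlib

open MeasureTheory

/-- The check (quantile loss) function at level `u`:
`ρ_u(x) = x * (u - 1{x < 0})`. -/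
noncomputable def checkFun (u x : ℝ) : ℝ := x * (u - if x < 0 then 1 else 0)

/-! As a function of `θ`, the loss `ρ_u(y - θ)` has right derivative `1{y ≤ θ} - u`. Integrating
over `[a, b]` and then, by Fubini, over the law of `Y` gives Knight's identity
`E[ρ_u(Y - b) - ρ_u(Y - a)] = ∫ s in a..b, (F s - u)`. With `a = θ_u`, the growth condition
bounds the integrand by `c * (s - θ_u)`, from below for `s ≥ θ_u` and from above for `s ≤ θ_u`. -/

open Set

section CheckFun

variable (u : ℝ)

lemma checkFun_eq_mul_add_max (x : ℝ) : checkFun u x = u * x + max (-x) 0 := by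
  unfold checkFun
  split_ifs with hx
  · rw [max_eq_left (by linarith)]; ring
  · rw [max_eq_right (by linarith)]; ring

lemma checkFun_of_nonpos {x : ℝ} (hx : x ≤ 0) : checkFun u x = x * (u - 1) := by
  rw [checkFun_eq_mul_add_max, max_eq_left (neg_nonneg.mpr hx)]; ring

lemma checkFun_of_nonneg {x : ℝ} (hx : 0 ≤ x) : checkFun u x = x * u := by
  rw [checkFun_eq_mul_add_max, max_eq_right (neg_nonpos.mpr hx)]; ring

lemma continuous_checkFun : Continuous (checkFun u) := by
  simp only [funext (checkFun_eq_mul_add_max u)]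
  fun_prop

lemma integrable_checkFun_comp {Ω : Type*} [MeasurableSpace Ω] {μ : Measure Ω} {X : Ω → ℝ}
    (hX : Integrable X μ) : Integrable (fun ω => checkFun u (X ω)) μ := by
  simp only [checkFun_eq_mul_add_max]
  exact (hX.const_mul u).add hX.neg.pos_part

lemma hasDerivWithinAt_checkFun_sub_Ioi (y s : ℝ) :
    HasDerivWithinAt (fun t => checkFun u (y - t)) ((Iic s).indicator 1 y - u) (Ioi s) s := by
  have hlin (k : ℝ) : HasDerivWithinAt (fun t => (y - t) * k) (-k) (Ioi s) s := by
    simpa using (((hasDerivAt_id s).const_sub y).mul_const k).hasDerivWithinAt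
  by_cases hys : y ≤ s
  · rw [indicator_of_mem (mem_Iic.mpr hys), Pi.one_apply, ← neg_sub u 1]
    refine (hlin (u - 1)).congr (fun t ht => ?_) (checkFun_of_nonpos u (sub_nonpos.mpr hys))
    exact checkFun_of_nonpos u (sub_nonpos.mpr (hys.trans (mem_Ioi.mp ht).le))
  · rw [indicator_of_notMem (notMem_Iic.mpr (not_le.mp hys)), zero_sub]
    have hlt : ∀ᶠ t in nhdsWithin s (Ioi s), t < y :=
      nhdsWithin_le_nhds (eventually_lt_nhds (not_le.mp hys))
    refine (hlin u).congr_of_eventuallyEq ?_ (checkFun_of_nonneg u (by linarith))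
    filter_upwards [hlt] with t ht
    exact checkFun_of_nonneg u (sub_nonneg.mpr ht.le)

lemma monotone_indicator_Iic_one (y : ℝ) : Monotone fun s => (Iic s).indicator (1 : ℝ → ℝ) y :=
  fun _ _ hst => indicator_le_indicator_of_subset (Iic_subset_Iic.mpr hst)
    (fun _ => zero_le_one) y

lemma checkFun_sub_sub_checkFun_sub_eq_integral (y a b : ℝ) :
    checkFun u (y - b) - checkFun u (y - a) = ∫ s in a..b, ((Iic s).indicator 1 y - u) :=
  (intervalIntegral.integral_eq_sub_of_hasDeriv_right
    ((continuous_checkFun u).comp (continuous_sub_left y)).continuousOn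
    (fun s _ => hasDerivWithinAt_checkFun_sub_Ioi u y s)
    ((monotone_indicator_Iic_one y).intervalIntegrable.sub intervalIntegrable_const)).symm

end CheckFun

section Knight

lemma integrable_uncurry_indicator_Iic_sub (κ : Measure (ℝ × ℝ)) [IsFiniteMeasure κ] (u : ℝ) :
    Integrable (Function.uncurry fun s y : ℝ => (Iic s).indicator 1 y - u) κ := by
  have hmeas : MeasurableSet {p : ℝ × ℝ | p.2 ≤ p.1} :=
    measurableSet_le measurable_snd measurable_fst
  exact ((integrable_const (1 : ℝ)).indicator hmeas).sub (integrable_const u)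

variable (ν : Measure ℝ) [IsFiniteMeasure ν]

lemma integral_indicator_Iic_sub (u s : ℝ) :
    ∫ y, ((Iic s).indicator 1 y - u) ∂ν = ν.real (Iic s) - u * ν.real univ := by
  have indicator_integrable : Integrable ((Iic s).indicator 1) ν :=
    (integrable_const (1 : ℝ)).indicator measurableSet_Iic
  rw [integral_sub indicator_integrable (integrable_const u),
    integral_indicator_one measurableSet_Iic, integral_const, smul_eq_mul, mul_comm]

theorem integral_checkFun_sub_sub_checkFun_sub (u a b : ℝ) :
    ∫ y, (checkFun u (y - b) - checkFun u (y - a)) ∂ν =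
      ∫ s in a..b, (ν.real (Iic s) - u * ν.real univ) := by
  have : IsFiniteMeasure (volume.restrict (uIoc a b)) :=
    inferInstanceAs (IsFiniteMeasure (volume.restrict (Ioc (min a b) (max a b))))
  simp only [checkFun_sub_sub_checkFun_sub_eq_integral]
  rw [← intervalIntegral_integral_swap (integrable_uncurry_indicator_Iic_sub _ u)]
  simp only [integral_indicator_Iic_sub]

theorem integral_checkFun_comp_sub_sub_checkFun_comp_sub {Ω : Type*} [MeasurableSpace Ω]
    {μ : Measure Ω} [IsFiniteMeasure μ] {Y : Ω → ℝ} (hY : AEMeasurable Y μ) (u a b : ℝ) :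
    ∫ ω, (checkFun u (Y ω - b) - checkFun u (Y ω - a)) ∂μ =
      ∫ s in a..b, (μ.real {ω | Y ω ≤ s} - u * μ.real univ) := by
  have hcont : Continuous fun y => checkFun u (y - b) - checkFun u (y - a) :=
    ((continuous_checkFun u).comp (continuous_sub_right b)).sub
      ((continuous_checkFun u).comp (continuous_sub_right a))
  rw [← integral_map hY hcont.aestronglyMeasurable, integral_checkFun_sub_sub_checkFun_sub]
  simp only [map_measureReal_apply_of_aemeasurable hY measurableSet_Iic,
    map_measureReal_apply_of_aemeasurable hY MeasurableSet.univ, preimage_univ]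
  rfl

end Knight

section LinearGrowth

lemma integral_const_mul_sub_left (a b c : ℝ) :
    ∫ s in a..b, c * (s - a) = c / 2 * (b - a) ^ 2 := by
  rw [intervalIntegral.integral_const_mul,
    intervalIntegral.integral_comp_sub_right (fun s => s), integral_id]
  ring

variable {f : ℝ → ℝ} {a b c : ℝ}

lemma half_mul_sq_le_integral_of_linear_le (hab : a ≤ b) (hf : IntervalIntegrable f volume a b)
    (hle : ∀ s ∈ Icc a b, c * (s - a) ≤ f s) : c / 2 * (b - a) ^ 2 ≤ ∫ s in a..b, f s := by
  rw [← integral_const_mul_sub_left]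
  exact intervalIntegral.integral_mono_on hab
    (Continuous.intervalIntegrable (by fun_prop) a b) hf hle

lemma half_mul_sq_le_integral_of_le_linear (hba : b ≤ a) (hf : IntervalIntegrable f volume a b)
    (hle : ∀ s ∈ Icc b a, f s ≤ c * (s - a)) : c / 2 * (b - a) ^ 2 ≤ ∫ s in a..b, f s := by
  rw [← integral_const_mul_sub_left, intervalIntegral.integral_symm,
    intervalIntegral.integral_symm b a, neg_le_neg_iff]
  exact intervalIntegral.integral_mono_on hba hf.symm
    (Continuous.intervalIntegrable (by fun_prop) b a) hle

end LinearGrowth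

theorem expected_checkLoss_quadratic_growth_general
    {Ω : Type*} [MeasurableSpace Ω] (μ : Measure Ω) [IsProbabilityMeasure μ]
    (Y : Ω → ℝ) (hY : AEMeasurable Y μ)
    (F : ℝ → ℝ) (hF : ∀ s : ℝ, F s = (μ {ω | Y ω ≤ s}).toReal)
    (u θu c δ : ℝ)
    (hright : ∀ s ∈ Icc θu (θu + δ), F s - u ≥ c * (s - θu))
    (hleft : ∀ s ∈ Icc (θu - δ) θu, u - F s ≥ c * (θu - s))
    (θ : ℝ) (hθ : |θ - θu| ≤ δ) :
    ∫ ω, (checkFun u (Y ω - θ) - checkFun u (Y ω - θu)) ∂μ ≥ c / 2 * (θ - θu) ^ 2 := by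
  have F_mono : Monotone F := fun s t hst => by
    rw [hF, hF]
    exact measureReal_mono fun ω (hω : Y ω ≤ s) => hω.trans hst
  have excess_eq : ∫ ω, (checkFun u (Y ω - θ) - checkFun u (Y ω - θu)) ∂μ =
      ∫ s in θu..θ, (F s - u) := by
    rw [integral_checkFun_comp_sub_sub_checkFun_comp_sub hY]
    simp only [hF, measureReal_def, measure_univ, ENNReal.toReal_one, mul_one]
  have hint : IntervalIntegrable (fun s => F s - u) volume θu θ :=
    F_mono.intervalIntegrable.sub intervalIntegrable_const
  obtain ⟨hθ_left, hθ_right⟩ := abs_le.mp hθ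
  rw [ge_iff_le, excess_eq]
  rcases le_total θu θ with h | h
  · refine half_mul_sq_le_integral_of_linear_le h hint fun s hs => ?_
    exact hright s ⟨hs.1, by linarith [hs.2]⟩
  · refine half_mul_sq_le_integral_of_le_linear h hint fun s hs => ?_
    linarith [hleft s ⟨by linarith [hs.1], hs.2⟩]

/-- Quadratic growth of the excess expected check loss. Let `Y` be an integrable
real random variable with cdf `F`, let `u ∈ (0,1)`, and suppose there exist
`θ_u ∈ ℝ`, `c > 0` and `δ > 0` such that `F θ_u = u`,
`F s - u ≥ c (s - θ_u)` for `s ∈ [θ_u, θ_u + δ]`, and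
`u - F s ≥ c (θ_u - s)` for `s ∈ [θ_u - δ, θ_u]`. Then for every `θ` with
`|θ - θ_u| ≤ δ`, `E[ρ_u(Y - θ)] - E[ρ_u(Y - θ_u)] ≥ (c/2) (θ - θ_u)²`. -/
theorem expected_checkLoss_quadratic_growth
    {Ω : Type*} [MeasurableSpace Ω] (μ : Measure Ω) [IsProbabilityMeasure μ]
    (Y : Ω → ℝ) (hY : Integrable Y μ)
    (F : ℝ → ℝ) (hF : ∀ s : ℝ, F s = (μ {ω | Y ω ≤ s}).toReal)
    (u : ℝ) (hu : u ∈ Set.Ioo (0 : ℝ) 1)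
    (θu c δ : ℝ) (hc : 0 < c) (hδ : 0 < δ)
    (hFθu : F θu = u)
    (hright : ∀ s ∈ Set.Icc θu (θu + δ), F s - u ≥ c * (s - θu))
    (hleft : ∀ s ∈ Set.Icc (θu - δ) θu, u - F s ≥ c * (θu - s)) :
    ∀ θ : ℝ, |θ - θu| ≤ δ →
      (∫ ω, checkFun u (Y ω - θ) ∂μ) - (∫ ω, checkFun u (Y ω - θu) ∂μ) ≥
        c / 2 * (θ - θu) ^ 2 := by
  intro θ hθ
  have hint (t : ℝ) : Integrable (fun ω => checkFun u (Y ω - t)) μ :=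
    integrable_checkFun_comp u (hY.sub (integrable_const t))
  rw [← integral_sub (hint θ) (hint θu)]
  exact expected_checkLoss_quadratic_growth_general μ Y hY.aemeasurable F hF u θu c δ
    hright hleft θ hθ
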